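/- Fix c > 0. Then the expected maximum matching size satisfies lim_{N→∞} E[m*(c,N)] / N = c / (c + 1/2). -/

import Mathlib

open MeasureTheory

/-- The maximum matching size between the points `X 0, …, X (k-1)` and
`Y 0, …, Y (k'-1)` with threshold `r`: the largest `j` for which there are
injections `σ, τ` with `|X (σ i) - Y (τ i)| < r` for all `i`. -/
noncomputable def mmSize (r : ℝ) {k k' : ℕ} (X : Fin k → ℝ) (Y : Fin k' → ℝ) : ℕ :=
  sSup {j : ℕ | ∃ σ : Fin j → Fin k, ∃ τ : Fin j → Fin k',
    Function.Injective σ ∧ Function.Injective τ ∧ ∀ i, |X (σ i) - Y (τ i)| < r}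

/-- The product of `N` copies of the uniform distribution on `[0,1]`. -/
noncomputable def unifCube (N : ℕ) : Measure (Fin N → ℝ) :=
  Measure.pi fun _ => volume.restrict (Set.Icc 0 1)

/-!
Cut `[0, 1)` into `n = K * N` cells. Up to the `O(N ^ 2 / n) = O(N / K)` points that share a cell
with another point, a maximum matching with threshold `c / N` is a maximum matching for the band
relation `|a - b| ≤ r`, `r ≈ c * K`, between the two sets of occupied cells. Adding a cell changes
the matching number by at most one, so after averaging over permutations of the cells only the
numbers of occupied cells matter, and the two sets may be replaced, at the cost of
`O(N / K + √N)`, by independent Bernoulli subsets of density `p = 1 / K`.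

For Bernoulli subsets of `{0, …, n - 1}` and `{0, …, m - 1}` the expected matching number obeys a
linear recursion: the topmost points of the two sets may be matched to each other if they are
within `r`, and a point farther than `r` from all candidates may be discarded. On the strip
`|n - m| ≤ r` the recursion has an explicit solution that is linear along the strip and quadratic
across it, and by a maximum principle the true expectation stays within a bounded distance of it.
This gives the rate `p ^ 2 * (2 * r + 1) / (1 + 2 * r * p)` per cell, that is
`(2 * r + 1) / (K + 2 * r)` per point, which tends to `c / (c + 1 / 2)` as `K → ∞` and `r / K → c`.
-/

section Matching

open Finset

variable {α β : Type*} {R : α → β → Prop} {A A' : Finset α} {B B' : Finset β}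
  {P Q : Finset (α × β)}

/-- `P` is a matching between the finite sets `A` and `B` in the bipartite graph with edge
relation `R`, encoded as its finite set of edges. -/
structure IsMatching (R : α → β → Prop) (A : Finset α) (B : Finset β) (P : Finset (α × β)) :
    Prop where
  subset : P ⊆ A ×ˢ B
  rel : ∀ e ∈ P, R e.1 e.2
  injOn_fst : Set.InjOn Prod.fst (P : Set (α × β))
  injOn_snd : Set.InjOn Prod.snd (P : Set (α × β))

open Classical in
/-- The largest size of a matching between the finite sets `A` and `B` in the bipartite graph
with edge relation `R`. -/
noncomputable def matchingNumber (R : α → β → Prop) (A : Finset α) (B : Finset β) : ℕ :=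
  {P ∈ (A ×ˢ B).powerset | IsMatching R A B P}.sup card

namespace IsMatching

theorem card_le_matchingNumber (h : IsMatching R A B P) : #P ≤ matchingNumber R A B := by
  classical
  exact le_sup (f := card) (mem_filter.2 ⟨mem_powerset.2 h.subset, h⟩)

theorem empty : IsMatching R A B ∅ where
  subset := empty_subset _
  rel := by simp
  injOn_fst := by simp
  injOn_snd := by simp

theorem fst_mem (h : IsMatching R A B P) {e : α × β} (he : e ∈ P) : e.1 ∈ A :=
  (mem_product.1 (h.subset he)).1

theorem snd_mem (h : IsMatching R A B P) {e : α × β} (he : e ∈ P) : e.2 ∈ B :=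
  (mem_product.1 (h.subset he)).2

theorem card_le_left (h : IsMatching R A B P) : #P ≤ #A :=
  card_le_card_of_injOn Prod.fst (fun _ he => h.fst_mem he) h.injOn_fst

theorem restrict (h : IsMatching R A B P) (hQP : Q ⊆ P) (hQ : Q ⊆ A' ×ˢ B') :
    IsMatching R A' B' Q where
  subset := hQ
  rel e he := h.rel e (hQP he)
  injOn_fst := h.injOn_fst.mono (coe_subset.2 hQP)
  injOn_snd := h.injOn_snd.mono (coe_subset.2 hQP)

theorem swap (h : IsMatching R A B P) :
    IsMatching (flip R) B A (P.map (Equiv.prodComm α β).toEmbedding) where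
  subset e he := by
    have he := mem_map_equiv.1 he
    exact mem_product.2 ⟨h.snd_mem he, h.fst_mem he⟩
  rel e he := h.rel _ (mem_map_equiv.1 he)
  injOn_fst e he e' he' hee := Prod.swap_injective <|
    h.injOn_snd (mem_map_equiv.1 he) (mem_map_equiv.1 he') hee
  injOn_snd e he e' he' hee := Prod.swap_injective <|
    h.injOn_fst (mem_map_equiv.1 he) (mem_map_equiv.1 he') hee

theorem insert [DecidableEq α] [DecidableEq β] {a : α} {b : β} (h : IsMatching R A B P)
    (ha : a ∈ A) (hb : b ∈ B) (hab : R a b) (ha' : ∀ e ∈ P, e.1 ≠ a) (hb' : ∀ e ∈ P, e.2 ≠ b) :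
    IsMatching R A B (insert (a, b) P) where
  subset := insert_subset (mk_mem_product ha hb) h.subset
  rel := (forall_mem_insert _ _ _).2 ⟨hab, h.rel⟩
  injOn_fst := by
    rw [coe_insert, Set.injOn_insert fun hmem => ha' _ hmem rfl]
    exact ⟨h.injOn_fst, fun ⟨e, he, hea⟩ => ha' e he hea⟩
  injOn_snd := by
    rw [coe_insert, Set.injOn_insert fun hmem => hb' _ hmem rfl]
    exact ⟨h.injOn_snd, fun ⟨e, he, heb⟩ => hb' e he heb⟩

end IsMatching

theorem exists_isMatching_card_eq (R : α → β → Prop) (A : Finset α) (B : Finset β) :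
    ∃ P, IsMatching R A B P ∧ #P = matchingNumber R A B := by
  classical
  obtain ⟨P, hP, hcard⟩ := exists_mem_eq_sup {P ∈ (A ×ˢ B).powerset | IsMatching R A B P}
    ⟨∅, mem_filter.2 ⟨empty_mem_powerset _, .empty⟩⟩ card
  exact ⟨P, (mem_filter.1 hP).2, hcard.symm⟩

theorem matchingNumber_le_iff {k : ℕ} :
    matchingNumber R A B ≤ k ↔ ∀ P, IsMatching R A B P → #P ≤ k := by
  refine ⟨fun h P hP => hP.card_le_matchingNumber.trans h, fun h => ?_⟩
  obtain ⟨P, hP, hcard⟩ := exists_isMatching_card_eq R A B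
  exact hcard ▸ h P hP

theorem matchingNumber_le_card_left : matchingNumber R A B ≤ #A :=
  matchingNumber_le_iff.2 fun _ hP => hP.card_le_left

theorem matchingNumber_flip : matchingNumber (flip R) B A = matchingNumber R A B := by
  refine le_antisymm (matchingNumber_le_iff.2 fun P hP => ?_)
    (matchingNumber_le_iff.2 fun P hP => ?_)
  · exact (card_map _).symm.trans_le (IsMatching.card_le_matchingNumber (R := R) hP.swap)
  · exact (card_map _).symm.trans_le hP.swap.card_le_matchingNumber

theorem matchingNumber_mono (hA : A ⊆ A') (hB : B ⊆ B') :
    matchingNumber R A B ≤ matchingNumber R A' B' :=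
  matchingNumber_le_iff.2 fun _ hP =>
    (hP.restrict Subset.rfl (hP.subset.trans (product_subset_product hA hB))).card_le_matchingNumber

theorem matchingNumber_add_card_le_left (hA : A ⊆ A') :
    matchingNumber R A' B + #A ≤ matchingNumber R A B + #A' := by
  classical
  obtain ⟨P, hP, hcard⟩ := exists_isMatching_card_eq R A' B
  have hin : #{e ∈ P | e.1 ∈ A} ≤ matchingNumber R A B := by
    refine (hP.restrict (filter_subset _ _) fun e he => ?_).card_le_matchingNumber
    obtain ⟨heP, heA⟩ := mem_filter.1 he
    exact mem_product.2 ⟨heA, hP.snd_mem heP⟩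
  have hout : #{e ∈ P | e.1 ∉ A} ≤ #(A' \ A) := by
    refine card_le_card_of_injOn Prod.fst (fun e he => ?_)
      (hP.injOn_fst.mono (coe_subset.2 (filter_subset _ _)))
    obtain ⟨heP, heA⟩ := mem_filter.1 he
    exact mem_sdiff.2 ⟨hP.fst_mem heP, heA⟩
  have hsplit := card_filter_add_card_filter_not (s := P) (fun e => e.1 ∈ A)
  have hsdiff := card_sdiff_add_card_eq_card hA
  omega

theorem matchingNumber_add_card_le_right (hB : B ⊆ B') :
    matchingNumber R A B' + #B ≤ matchingNumber R A B + #B' := by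
  simpa only [matchingNumber_flip] using
    matchingNumber_add_card_le_left (R := flip R) (B := A) hB

section Insert

variable {x : α} {y : β}

theorem matchingNumber_insert_left [DecidableEq α] (hx : ∀ b ∈ B, ¬ R x b) :
    matchingNumber R (insert x A) B = matchingNumber R A B := by
  refine le_antisymm (matchingNumber_le_iff.2 fun P hP => ?_)
    (matchingNumber_mono (subset_insert _ _) Subset.rfl)
  refine (hP.restrict Subset.rfl fun e he => ?_).card_le_matchingNumber
  refine mem_product.2 ⟨(mem_insert.1 (hP.fst_mem he)).resolve_left fun hex => ?_, hP.snd_mem he⟩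
  exact hx e.2 (hP.snd_mem he) (hex ▸ hP.rel e he)

theorem matchingNumber_insert_right [DecidableEq β] (hy : ∀ a ∈ A, ¬ R a y) :
    matchingNumber R A (insert y B) = matchingNumber R A B := by
  simpa only [matchingNumber_flip] using matchingNumber_insert_left (R := flip R) (A := B) hy

variable [DecidableEq α] [DecidableEq β]

-- If `P` uses `x` and `y` in two distinct edges `(x, b)` and `(a, y)`, trade both for `(a, b)`.
theorem matchingNumber_insert_insert_le (hR : ∀ a ∈ A, ∀ b ∈ B, R a y → R x b → R a b) :
    matchingNumber R (insert x A) (insert y B) ≤ matchingNumber R A B + 1 := by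
  refine matchingNumber_le_iff.2 fun P hP => ?_
  set P₀ := {e ∈ P | ¬ (e.1 = x ∨ e.2 = y)}
  have hsplit : #{e ∈ P | e.1 = x ∨ e.2 = y} + #P₀ = #P := card_filter_add_card_filter_not _
  have hP₀ : IsMatching R A B P₀ := hP.restrict (filter_subset _ _) fun e he => by
    obtain ⟨heP, hxy⟩ := mem_filter.1 he
    obtain ⟨hx, hy⟩ := not_or.1 hxy
    exact mem_product.2 ⟨(mem_insert.1 (hP.fst_mem heP)).resolve_left hx,
      (mem_insert.1 (hP.snd_mem heP)).resolve_left hy⟩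
  by_cases hcross : ∃ a b, a ≠ x ∧ b ≠ y ∧ (a, y) ∈ P ∧ (x, b) ∈ P
  · obtain ⟨a, b, hax, hby, hay, hxb⟩ := hcross
    have htouch : #{e ∈ P | e.1 = x ∨ e.2 = y} ≤ 2 := by
      refine (card_le_card fun e he => ?_).trans (card_le_two (a := (x, b)) (b := (a, y)))
      obtain ⟨heP, hx | hy⟩ := mem_filter.1 he
      · exact mem_insert.2 (.inl (hP.injOn_fst heP hxb hx))
      · exact mem_insert.2 (.inr (mem_singleton.2 (hP.injOn_snd heP hay hy)))
    have haA : a ∈ A := (mem_insert.1 (hP.fst_mem hay)).resolve_left hax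
    have hbB : b ∈ B := (mem_insert.1 (hP.snd_mem hxb)).resolve_left hby
    have ha : ∀ e ∈ P₀, e.1 ≠ a := fun e he hea => (mem_filter.1 he).2 <| .inr <|
      congrArg Prod.snd (hP.injOn_fst (mem_filter.1 he).1 hay hea)
    have hb : ∀ e ∈ P₀, e.2 ≠ b := fun e he heb => (mem_filter.1 he).2 <| .inl <|
      congrArg Prod.fst (hP.injOn_snd (mem_filter.1 he).1 hxb heb)
    have hle := (hP₀.insert haA hbB (hR a haA b hbB (hP.rel _ hay) (hP.rel _ hxb))
      ha hb).card_le_matchingNumber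
    rw [card_insert_of_notMem fun h => ha _ h rfl] at hle
    omega
  · have htouch : #{e ∈ P | e.1 = x ∨ e.2 = y} ≤ 1 := by
      refine card_le_one.2 fun e he f hf => ?_
      obtain ⟨heP, he⟩ := mem_filter.1 he
      obtain ⟨hfP, hf⟩ := mem_filter.1 hf
      have hfst := @hP.injOn_fst e heP f hfP
      have hsnd := @hP.injOn_snd e heP f hfP
      grind
    have hle := hP₀.card_le_matchingNumber
    omega

theorem matchingNumber_insert_insert (hx : x ∉ A) (hy : y ∉ B) (hxy : R x y)
    (hR : ∀ a ∈ A, ∀ b ∈ B, R a y → R x b → R a b) :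
    matchingNumber R (insert x A) (insert y B) = matchingNumber R A B + 1 := by
  refine le_antisymm (matchingNumber_insert_insert_le hR) ?_
  obtain ⟨P, hP, hcard⟩ := exists_isMatching_card_eq R A B
  have hx' : ∀ e ∈ P, e.1 ≠ x := fun e he hex => hx (hex ▸ hP.fst_mem he)
  have hP' : IsMatching R (insert x A) (insert y B) P := hP.restrict Subset.rfl <|
    hP.subset.trans (product_subset_product (subset_insert _ _) (subset_insert _ _))
  have hle := (hP'.insert (mem_insert_self _ _) (mem_insert_self _ _) hxy hx'
    fun e he hey => hy (hey ▸ hP.snd_mem he)).card_le_matchingNumber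
  rwa [card_insert_of_notMem fun h => hx' _ h rfl, hcard] at hle

end Insert

section Image

variable {γ δ : Type*} [DecidableEq γ] [DecidableEq δ] {f : α → γ} {g : β → δ}
  {R' : γ → δ → Prop}

theorem matchingNumber_le_image (hf : Set.InjOn f A) (hg : Set.InjOn g B)
    (hR : ∀ a ∈ A, ∀ b ∈ B, R a b → R' (f a) (g b)) :
    matchingNumber R A B ≤ matchingNumber R' (A.image f) (B.image g) := by
  obtain ⟨P, hP, hcard⟩ := exists_isMatching_card_eq R A B
  have hinj : Set.InjOn (Prod.map f g) (P : Set (α × β)) := fun e he e' he' hee =>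
    hP.injOn_fst he he' (hf (hP.fst_mem he) (hP.fst_mem he') (congrArg Prod.fst hee))
  have hP' : IsMatching R' (A.image f) (B.image g) (P.image (Prod.map f g)) :=
    { subset := image_subset_iff.2 fun e he => mem_product.2
        ⟨mem_image_of_mem _ (hP.fst_mem he), mem_image_of_mem _ (hP.snd_mem he)⟩
      rel := forall_mem_image.2 fun e he =>
        hR _ (hP.fst_mem he) _ (hP.snd_mem he) (hP.rel e he)
      injOn_fst := by
        rw [coe_image]
        rintro _ ⟨e, he, rfl⟩ _ ⟨e', he', rfl⟩ hee
        exact congrArg _ (hP.injOn_fst he he' (hf (hP.fst_mem he) (hP.fst_mem he') hee))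
      injOn_snd := by
        rw [coe_image]
        rintro _ ⟨e, he, rfl⟩ _ ⟨e', he', rfl⟩ hee
        exact congrArg _ (hP.injOn_snd he he' (hg (hP.snd_mem he) (hP.snd_mem he') hee)) }
  rw [← hcard, ← card_image_of_injOn hinj]
  exact hP'.card_le_matchingNumber

theorem matchingNumber_image_le_of_injOn (hf : Set.InjOn f A) (hg : Set.InjOn g B)
    (hR : ∀ a ∈ A, ∀ b ∈ B, R' (f a) (g b) → R a b) :
    matchingNumber R' (A.image f) (B.image g) ≤ matchingNumber R A B := by
  refine matchingNumber_le_iff.2 fun P hP => ?_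
  set P' := {e ∈ A ×ˢ B | Prod.map f g e ∈ P} with hP'_def
  have hmem {e : α × β} : e ∈ P' → (e.1 ∈ A ∧ e.2 ∈ B) ∧ Prod.map f g e ∈ P := fun he => by
    simpa only [hP'_def, mem_filter, mem_product] using he
  have hP' : IsMatching R A B P' :=
    { subset := filter_subset _ _
      rel := fun e he => hR _ (hmem he).1.1 _ (hmem he).1.2 (hP.rel _ (hmem he).2)
      injOn_fst := fun e he e' he' hee => Prod.ext hee <|
        hg (hmem he).1.2 (hmem he').1.2 <| congrArg Prod.snd <|
          hP.injOn_fst (hmem he).2 (hmem he').2 (congrArg f hee)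
      injOn_snd := fun e he e' he' hee => Prod.ext
        (hf (hmem he).1.1 (hmem he').1.1 <| congrArg Prod.fst <|
          hP.injOn_snd (hmem he).2 (hmem he').2 (congrArg g hee)) hee }
  have hsub : P ⊆ P'.image (Prod.map f g) := fun e he => by
    obtain ⟨a, ha, hae⟩ := mem_image.1 (hP.fst_mem he)
    obtain ⟨b, hb, hbe⟩ := mem_image.1 (hP.snd_mem he)
    have heq : Prod.map f g (a, b) = e := Prod.ext hae hbe
    exact mem_image.2 ⟨(a, b), mem_filter.2 ⟨mk_mem_product ha hb, heq ▸ he⟩, heq⟩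
  exact (card_le_card hsub).trans (card_image_le.trans hP'.card_le_matchingNumber)

variable (A f) in
theorem exists_injOn_image_eq :
    ∃ A₀ ⊆ A, Set.InjOn f A₀ ∧ A₀.image f = A.image f := by
  obtain ⟨A₀, hA₀, hinj, himage⟩ := exists_subset_injOn_image_eq_of_surjOn (A : Set α) (A.image f)
    (by rw [coe_image]; exact Set.surjOn_image f A)
  exact ⟨A₀, coe_subset.1 hA₀, hinj, himage⟩

theorem matchingNumber_image_le (hR : ∀ a ∈ A, ∀ b ∈ B, R' (f a) (g b) → R a b) :
    matchingNumber R' (A.image f) (B.image g) ≤ matchingNumber R A B := by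
  obtain ⟨A₀, hA₀, hf, hfA⟩ := exists_injOn_image_eq A f
  obtain ⟨B₀, hB₀, hg, hgB⟩ := exists_injOn_image_eq B g
  rw [← hfA, ← hgB]
  exact (matchingNumber_image_le_of_injOn hf hg fun a ha b hb => hR a (hA₀ ha) b (hB₀ hb)).trans
    (matchingNumber_mono hA₀ hB₀)

theorem matchingNumber_add_card_image_le (hR : ∀ a ∈ A, ∀ b ∈ B, R a b → R' (f a) (g b)) :
    matchingNumber R A B + #(A.image f) + #(B.image g) ≤
      matchingNumber R' (A.image f) (B.image g) + #A + #B := by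
  obtain ⟨A₀, hA₀, hf, hfA⟩ := exists_injOn_image_eq A f
  obtain ⟨B₀, hB₀, hg, hgB⟩ := exists_injOn_image_eq B g
  have hleft := matchingNumber_add_card_le_left (R := R) (B := B) hA₀
  have hright := matchingNumber_add_card_le_right (R := R) (A := A₀) hB₀
  have himage := matchingNumber_le_image hf hg fun a ha b hb => hR a (hA₀ ha) b (hB₀ hb)
  have hcardA := card_image_of_injOn hf
  have hcardB := card_image_of_injOn hg
  rw [hfA, hgB] at himage
  rw [hfA] at hcardA
  rw [hgB] at hcardB
  omega

end Image

theorem le_matchingNumber_iff {k : ℕ} :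
    k ≤ matchingNumber R A B ↔ ∃ (σ : Fin k → α) (τ : Fin k → β),
      σ.Injective ∧ τ.Injective ∧ ∀ i, σ i ∈ A ∧ τ i ∈ B ∧ R (σ i) (τ i) := by
  classical
  constructor
  · intro hk
    obtain ⟨P, hP, hcard⟩ := exists_isMatching_card_eq R A B
    obtain ⟨Q, hQP, rfl⟩ := exists_subset_card_eq (hk.trans_eq hcard.symm)
    let e (i : Fin #Q) : P := ⟨Q.equivFin.symm i, hQP (Q.equivFin.symm i).2⟩
    have he : e.Injective := fun i j hij =>
      Q.equivFin.symm.injective (Subtype.ext (congrArg (fun e : P => (e : α × β)) hij))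
    exact ⟨fun i => (e i).1.1, fun i => (e i).1.2,
      fun i j hij => he (Subtype.ext (hP.injOn_fst (e i).2 (e j).2 hij)),
      fun i j hij => he (Subtype.ext (hP.injOn_snd (e i).2 (e j).2 hij)),
      fun i => ⟨hP.fst_mem (e i).2, hP.snd_mem (e i).2, hP.rel _ (e i).2⟩⟩
  · rintro ⟨σ, τ, hσ, hτ, h⟩
    have himage : IsMatching R A B (univ.image fun i => (σ i, τ i)) :=
      { subset := image_subset_iff.2 fun i _ => mk_mem_product (h i).1 (h i).2.1
        rel := forall_mem_image.2 fun i _ => (h i).2.2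
        injOn_fst := by
          rw [coe_image]
          rintro _ ⟨i, -, rfl⟩ _ ⟨j, -, rfl⟩ hij
          rw [hσ hij]
        injOn_snd := by
          rw [coe_image]
          rintro _ ⟨i, -, rfl⟩ _ ⟨j, -, rfl⟩ hij
          rw [hτ hij] }
    have hcard := card_image_of_injective univ (f := fun i => (σ i, τ i))
      fun i j hij => hσ (congrArg Prod.fst hij)
    rw [card_univ, Fintype.card_fin] at hcard
    exact hcard ▸ himage.card_le_matchingNumber

end Matching

section Bernoulli

open Finset

variable {α β : Type*} {p : ℝ} {s : Finset α} {g g' h : Finset α → ℝ}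

/-- The expectation of `g` at the random subset of `s` which contains each element independently
with probability `p`. -/
def bernoulliExp (p : ℝ) (s : Finset α) (g : Finset α → ℝ) : ℝ :=
  ∑ S ∈ s.powerset, p ^ #S * (1 - p) ^ (#s - #S) * g S

theorem bernoulliExp_congr (hg : ∀ S ⊆ s, g S = g' S) :
    bernoulliExp p s g = bernoulliExp p s g' :=
  sum_congr rfl fun S hS => by rw [hg S (mem_powerset.1 hS)]

theorem bernoulliExp_add :
    bernoulliExp p s (fun S => g S + g' S) = bernoulliExp p s g + bernoulliExp p s g' := by
  simp only [bernoulliExp, mul_add, sum_add_distrib]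

theorem bernoulliExp_sub :
    bernoulliExp p s (fun S => g S - g' S) = bernoulliExp p s g - bernoulliExp p s g' := by
  simp only [bernoulliExp, mul_sub, sum_sub_distrib]

theorem bernoulliExp_const_mul (a : ℝ) :
    bernoulliExp p s (fun S => a * g S) = a * bernoulliExp p s g := by
  simp only [bernoulliExp, mul_sum, mul_left_comm]

theorem bernoulliExp_const (a : ℝ) : bernoulliExp p s (fun _ => a) = a := by
  simp only [bernoulliExp, ← sum_mul, sum_pow_mul_eq_add_pow, add_sub_cancel, one_pow, one_mul]

theorem bernoulliExp_insert [DecidableEq α] {a : α} (ha : a ∉ s) :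
    bernoulliExp p (insert a s) g =
      (1 - p) * bernoulliExp p s g + p * bernoulliExp p s (fun S => g (insert a S)) := by
  simp only [bernoulliExp, sum_powerset_insert ha, card_insert_of_notMem ha, mul_sum]
  congr 1 <;> refine sum_congr rfl fun S hS => ?_
  · rw [Nat.sub_add_comm (card_le_card (mem_powerset.1 hS)), pow_succ]
    ring
  · rw [card_insert_of_notMem fun haS => ha (mem_powerset.1 hS haS), Nat.add_sub_add_right,
      pow_succ]
    ring

theorem bernoulliExp_map (e : α ↪ β) (g : Finset β → ℝ) :
    bernoulliExp p (s.map e) g = bernoulliExp p s fun S => g (S.map e) := by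
  classical
  simp only [bernoulliExp, map_eq_image, powerset_image,
    sum_image (image_injective e.injective).injOn, card_image_of_injective _ e.injective]

theorem abs_bernoulliExp_sub_le (h0 : 0 ≤ p) (h1 : p ≤ 1) (hg : ∀ S ⊆ s, |g S - g' S| ≤ h S) :
    |bernoulliExp p s g - bernoulliExp p s g'| ≤ bernoulliExp p s h := by
  rw [← bernoulliExp_sub]
  refine (abs_sum_le_sum_abs _ _).trans (sum_le_sum fun S hS => ?_)
  have hw : 0 ≤ p ^ #S * (1 - p) ^ (#s - #S) :=
    mul_nonneg (pow_nonneg h0 _) (pow_nonneg (sub_nonneg.2 h1) _)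
  rw [abs_mul, abs_of_nonneg hw]
  exact mul_le_mul_of_nonneg_left (hg S (mem_powerset.1 hS)) hw

variable (p s) in
theorem bernoulliExp_card_sub_sq :
    bernoulliExp p s (fun S => ((#S : ℝ) - #s * p) ^ 2) = #s * p * (1 - p) := by
  have hvar := congrArg (Polynomial.eval p) (bernsteinPolynomial.variance ℝ #s)
  simp only [Polynomial.eval_finsetSum, bernsteinPolynomial, nsmul_eq_mul, Polynomial.eval_mul,
    Polynomial.eval_pow, Polynomial.eval_sub, Polynomial.eval_natCast, Polynomial.eval_X,
    Polynomial.eval_one] at hvar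
  rw [← hvar, bernoulliExp,
    sum_powerset_apply_card fun m => p ^ m * (1 - p) ^ (#s - m) * ((m : ℝ) - #s * p) ^ 2]
  refine sum_congr rfl fun m _ => ?_
  rw [nsmul_eq_mul]
  ring

theorem bernoulliExp_abs_card_sub_le (h0 : 0 ≤ p) (h1 : p ≤ 1) :
    bernoulliExp p s (fun S => |(#S : ℝ) - #s * p|) ≤ √(#s * p) := by
  refine Real.le_sqrt_of_sq_le ?_
  calc (bernoulliExp p s fun S => |(#S : ℝ) - #s * p|) ^ 2
      ≤ bernoulliExp p s fun S => |(#S : ℝ) - #s * p| ^ 2 :=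
        Real.pow_arith_mean_le_arith_mean_pow _ _ _
          (fun S _ => mul_nonneg (pow_nonneg h0 _) (pow_nonneg (sub_nonneg.2 h1) _))
          (by rw [sum_pow_mul_eq_add_pow, add_sub_cancel, one_pow]) (fun S _ => abs_nonneg _) 2
    _ = #s * p * (1 - p) := by simp only [sq_abs, bernoulliExp_card_sub_sq]
    _ ≤ #s * p := mul_le_of_le_one_right (by positivity) (by linarith)

end Bernoulli

section Strip

open Finset Filter Topology

variable {r n m : ℕ} {p : ℝ}

/-- The band relation of width `r` on `ℕ`, that is `|a - b| ≤ r`, written without subtraction. -/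
def Within (r a b : ℕ) : Prop :=
  a ≤ b + r ∧ b ≤ a + r

/-- The expected size of a maximum matching, for the band relation of width `r`, between independent
random subsets of `{0, …, n - 1}` and `{0, …, m - 1}` of density `p`. -/
noncomputable def bandMean (r : ℕ) (p : ℝ) (n m : ℕ) : ℝ :=
  bernoulliExp p (range n) fun S => bernoulliExp p (range m) fun T => matchingNumber (Within r) S T

/-- The analogue of `bandMean` in which the first random subset is enlarged by the point `n`. It is
the auxiliary sequence in the recursion for `bandMean`. -/
noncomputable def bandMeanInsert (r : ℕ) (p : ℝ) (n m : ℕ) : ℝ :=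
  bernoulliExp p (range n) fun S =>
    bernoulliExp p (range m) fun T => matchingNumber (Within r) (insert n S) T

theorem bandMean_succ_left (r : ℕ) (p : ℝ) (n m : ℕ) :
    bandMean r p (n + 1) m = (1 - p) * bandMean r p n m + p * bandMeanInsert r p n m := by
  rw [bandMean, range_add_one, bernoulliExp_insert notMem_range_self]
  rfl

theorem bandMean_succ_right (h : n + r ≤ m) : bandMean r p n (m + 1) = bandMean r p n m := by
  refine bernoulliExp_congr fun S hS => ?_
  have hm (T : Finset ℕ) :
      matchingNumber (Within r) S (insert m T) = matchingNumber (Within r) S T :=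
    matchingNumber_insert_right fun a ha ham => by
      have := mem_range.1 (hS ha)
      have := ham.2
      omega
  rw [range_add_one, bernoulliExp_insert notMem_range_self]
  simp only [hm]
  ring

theorem bandMeanInsert_eq_bandMean (h : m + r ≤ n) :
    bandMeanInsert r p n m = bandMean r p n m :=
  bernoulliExp_congr fun S _ => bernoulliExp_congr fun T hT => by
    rw [matchingNumber_insert_left fun b hb hnb => ?_]
    have := mem_range.1 (hT hb)
    have := hnb.1
    omega

theorem matchingNumber_within_insert_insert {S T : Finset ℕ} (hS : S ⊆ range n) (hT : T ⊆ range m)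
    (h : Within r n m) :
    matchingNumber (Within r) (insert n S) (insert m T) = matchingNumber (Within r) S T + 1 := by
  refine matchingNumber_insert_insert (fun hn => notMem_range_self (hS hn))
    (fun hm => notMem_range_self (hT hm)) h fun a ha b hb ham hnb => ?_
  have := mem_range.1 (hS ha)
  have := mem_range.1 (hT hb)
  have := ham.2
  have := hnb.1
  exact ⟨by omega, by omega⟩

theorem bandMeanInsert_succ_right (h : Within r n m) :
    bandMeanInsert r p n (m + 1) =
      (1 - p) * bandMeanInsert r p n m + p * (bandMean r p n m + 1) := by
  have hS : ∀ S ⊆ range n,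
      (bernoulliExp p (range (m + 1)) fun T => (matchingNumber (Within r) (insert n S) T : ℝ)) =
        (1 - p) * (bernoulliExp p (range m) fun T => matchingNumber (Within r) (insert n S) T) +
        p * ((bernoulliExp p (range m) fun T => matchingNumber (Within r) S T) + 1) := by
    intro S hS
    rw [range_add_one, bernoulliExp_insert notMem_range_self]
    congr 2
    rw [← bernoulliExp_const (p := p) (s := range m) 1, ← bernoulliExp_add]
    refine bernoulliExp_congr fun T hT => ?_
    rw [matchingNumber_within_insert_insert hS hT h]
    push_cast
    rfl
  rw [bandMeanInsert, bernoulliExp_congr hS, bernoulliExp_add, bernoulliExp_const_mul,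
    bernoulliExp_const_mul, bernoulliExp_add, bernoulliExp_const]
  rfl

theorem abs_convexCombination_le {x y C : ℝ} (h0 : 0 ≤ p) (h1 : p ≤ 1) (hx : |x| ≤ C)
    (hy : |y| ≤ C) : |(1 - p) * x + p * y| ≤ C := by
  have := convex_closedBall (0 : ℝ) C (by simpa using hx) (by simpa using hy)
    (sub_nonneg.2 h1) h0 (sub_add_cancel 1 p)
  simpa using this

theorem strip_max_principle {u v : ℕ → ℕ → ℝ} {L : ℕ} {C : ℝ} (h0 : 0 ≤ p) (h1 : p ≤ 1)
    (hu : ∀ i, ∀ j ≤ L, u (i + 1) j = (1 - p) * u i (j + 1) + p * v i (j + 1))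
    (hv : ∀ i, ∀ j ≤ L, v i (j + 1) = (1 - p) * v i j + p * u i j)
    (hv₀ : ∀ i, v i 0 = u i 0) (huL : ∀ i, u i (L + 1) = u i L)
    (hC : ∀ j ≤ L, |u 0 j| ≤ C) (i : ℕ) : ∀ j ≤ L, |u i j| ≤ C := by
  induction i with
  | zero => exact hC
  | succ i ih =>
    have hu_le : ∀ j ≤ L + 1, |u i j| ≤ C := fun j hj => by
      rcases hj.lt_or_eq with hj | rfl
      · exact ih j (Nat.lt_succ_iff.1 hj)
      · exact huL i ▸ ih L le_rfl
    have hv_le : ∀ j ≤ L + 1, |v i j| ≤ C := fun j => by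
      induction j with
      | zero => exact fun _ => hv₀ i ▸ ih 0 (Nat.zero_le _)
      | succ j ihj =>
        intro hj
        rw [hv i j (Nat.le_of_succ_le_succ hj)]
        exact abs_convexCombination_le h0 h1 (ihj (by omega)) (ih j (by omega))
    intro j hj
    rw [hu i j hj]
    exact abs_convexCombination_le h0 h1 (hu_le _ (by omega)) (hv_le _ (by omega))

/-- The limit of `bandMean r p n n / n` as `n → ∞`, a matching density per cell. -/
noncomputable def bandRate (r : ℕ) (p : ℝ) : ℝ :=
  p ^ 2 * (2 * r + 1) / (1 + 2 * r * p)

theorem exists_abs_bandMean_sub_potential_le (r : ℕ) (h0 : 0 < p) (h1 : p ≤ 1) :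
    ∃ (a : ℕ → ℝ) (C : ℝ), ∀ i, ∀ j ≤ 2 * r,
      |bandMean r p (i + r) (i + j) - (bandRate r p * i + a j)| ≤ C := by
  -- `bandRate r p * i + a j` and `bandRate r p * i + b j` solve the recursion satisfied by
  -- `bandMean r p (i + r) (i + j)` and `bandMeanInsert r p (i + r) (i + j)` for `j ≤ 2 * r`.
  set A : ℝ := p ^ 2 / (1 + 2 * r * p) with hA
  have hden : 1 + 2 * r * p ≠ 0 := by positivity
  have hrate : bandRate r p = A * (2 * r + 1) := by rw [bandRate, hA]; ring
  have hAp : p ^ 2 = A * (1 + 2 * r * p) := by rw [hA, div_mul_cancel₀ _ hden]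
  let a (j : ℕ) : ℝ := A * j * (4 * r + 1 - j) / 2
  let b (j : ℕ) : ℝ := a j + A * j / p
  obtain ⟨C, hC⟩ := ((Set.finite_Iic (2 * r)).image fun j =>
    |bandMean r p (0 + r) (0 + j) - (bandRate r p * (0 : ℕ) + a j)|).bddAbove
  refine ⟨a, C, strip_max_principle
    (u := fun i j => bandMean r p (i + r) (i + j) - (bandRate r p * i + a j))
    (v := fun i j => bandMeanInsert r p (i + r) (i + j) - (bandRate r p * i + b j)) h0.le h1
    (fun i j _ => ?_) (fun i j hj => ?_) (fun i => ?_) (fun i => ?_)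
    fun j hj => hC (Set.mem_image_of_mem _ hj)⟩
  · rw [show i + 1 + r = i + r + 1 by omega, show i + 1 + j = i + (j + 1) by omega,
      bandMean_succ_left, hrate]
    simp only [a, b]
    field_simp
    push_cast
    ring
  · rw [← add_assoc, bandMeanInsert_succ_right ⟨by omega, by omega⟩]
    simp only [a, b]
    field_simp
    push_cast
    linear_combination 2 * hAp
  · rw [bandMeanInsert_eq_bandMean (by omega)]
    simp only [a, b]
    simp
  · rw [← add_assoc, bandMean_succ_right (by omega)]
    simp only [a]
    push_cast
    ring

theorem exists_abs_bandMean_sub_le (r : ℕ) (h0 : 0 < p) (h1 : p ≤ 1) :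
    ∃ C, ∀ n, r ≤ n → |bandMean r p n n - bandRate r p * n| ≤ C := by
  obtain ⟨a, C, hC⟩ := exists_abs_bandMean_sub_potential_le r h0 h1
  refine ⟨C + |a r - bandRate r p * r|, fun n hn => ?_⟩
  obtain ⟨i, rfl⟩ := Nat.exists_eq_add_of_le' hn
  have hi := hC i r (by omega)
  calc |bandMean r p (i + r) (i + r) - bandRate r p * (i + r : ℕ)|
      = |bandMean r p (i + r) (i + r) - (bandRate r p * i + a r) + (a r - bandRate r p * r)| := by
        push_cast
        ring_nf
    _ ≤ C + |a r - bandRate r p * r| := (abs_add_le _ _).trans (by gcongr)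

theorem tendsto_bandMean_div (r : ℕ) (h0 : 0 < p) (h1 : p ≤ 1) :
    Tendsto (fun n : ℕ => bandMean r p n n / n) atTop (𝓝 (bandRate r p)) := by
  obtain ⟨C, hC⟩ := exists_abs_bandMean_sub_le r h0 h1
  refine tendsto_iff_norm_sub_tendsto_zero.2 <|
    squeeze_zero' (.of_forall fun _ => norm_nonneg _) ?_ (tendsto_const_div_atTop_nhds_zero_nat C)
  filter_upwards [eventually_ge_atTop r, eventually_gt_atTop 0] with n hrn hn
  have hn : (0 : ℝ) < n := Nat.cast_pos.2 hn
  rw [Real.norm_eq_abs, div_sub' hn.ne', abs_div, abs_of_pos hn, mul_comm (n : ℝ)]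
  exact div_le_div_of_nonneg_right (hC n hrn) hn.le

end Strip

section Occupancy

open Finset
open scoped BigOperators

variable {α β : Type*} {p q : ℝ}

/-- `F` is `1`-Lipschitz with respect to adding elements to a finite set. -/
def CardLipschitz (F : Finset α → ℝ) : Prop :=
  ∀ ⦃S T⦄, S ⊆ T → |F T - F S| ≤ #T - #S

theorem cardLipschitz_matchingNumber_left (R : α → β → Prop) (B : Finset β) :
    CardLipschitz fun A => (matchingNumber R A B : ℝ) := fun S T h => by
  have hmono : (matchingNumber R S B : ℝ) ≤ matchingNumber R T B :=
    Nat.cast_le.2 (matchingNumber_mono h Subset.rfl)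
  have hcard : (matchingNumber R T B + #S : ℝ) ≤ matchingNumber R S B + #T := by
    exact_mod_cast matchingNumber_add_card_le_left (R := R) (B := B) h
  rw [abs_of_nonneg (sub_nonneg.2 hmono)]
  linarith

theorem cardLipschitz_matchingNumber_right (R : α → β → Prop) (A : Finset α) :
    CardLipschitz fun B => (matchingNumber R A B : ℝ) := by
  simpa only [matchingNumber_flip] using cardLipschitz_matchingNumber_left (flip R) A

theorem abs_expect_sub_expect_le {ι : Type*} {s : Finset ι} {f g : ι → ℝ} {C : ℝ} (hC : 0 ≤ C)
    (h : ∀ i ∈ s, |f i - g i| ≤ C) : |𝔼 i ∈ s, f i - 𝔼 i ∈ s, g i| ≤ C := by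
  rw [← expect_sub_distrib]
  rcases s.eq_empty_or_nonempty with rfl | hs
  · simpa using hC
  · exact (abs_expect_le _ _).trans (expect_le hs h)

theorem CardLipschitz.expect {ι : Type*} {s : Finset ι} {F : ι → Finset α → ℝ}
    (hF : ∀ i, CardLipschitz (F i)) : CardLipschitz fun S => 𝔼 i ∈ s, F i S := fun _ _ h =>
  abs_expect_sub_expect_le (sub_nonneg.2 (Nat.cast_le.2 (card_le_card h))) fun i _ => hF i h

theorem exists_perm_map_subset [Finite α] {S T : Finset α} (h : #S ≤ #T) :
    ∃ π : Equiv.Perm α, S.map π.toEmbedding ⊆ T := by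
  classical
  obtain ⟨T', hT', hcard⟩ := exists_subset_card_eq h
  let e : S ≃ T' := equivOfCardEq hcard.symm
  refine ⟨e.extendSubtype, fun x hx => ?_⟩
  obtain ⟨i, hi, rfl⟩ := mem_map.1 hx
  exact hT' (e.extendSubtype_mem i hi)

variable [Fintype α] [DecidableEq α] {F : Finset α → ℝ}

/-- The average of `F` over the orbit of `S` under permutations of `α`: the mean of `F` over all
sets with as many elements as `S`. -/
noncomputable def permAvg (F : Finset α → ℝ) (S : Finset α) : ℝ :=
  𝔼 π : Equiv.Perm α, F (S.map π.toEmbedding)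

theorem permAvg_map (F : Finset α → ℝ) (S : Finset α) (π : Equiv.Perm α) :
    permAvg F (S.map π.toEmbedding) = permAvg F S :=
  Fintype.expect_equiv (Equiv.mulRight π) _ _ fun π' => by rw [map_map]; rfl

theorem CardLipschitz.abs_permAvg_sub_le_of_card_le (hF : CardLipschitz F) {S T : Finset α}
    (h : #S ≤ #T) : |permAvg F T - permAvg F S| ≤ #T - #S := by
  obtain ⟨π, hπ⟩ := exists_perm_map_subset h
  rw [← permAvg_map F S π]
  refine abs_expect_sub_expect_le (sub_nonneg.2 (Nat.cast_le.2 h)) fun π' _ => ?_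
  simpa only [card_map] using hF (map_subset_map (f := π'.toEmbedding).2 hπ)

theorem CardLipschitz.abs_permAvg_sub_le (hF : CardLipschitz F) (S T : Finset α) :
    |permAvg F T - permAvg F S| ≤ |(#T : ℝ) - #S| := by
  rcases le_total #S #T with h | h
  · exact (hF.abs_permAvg_sub_le_of_card_le h).trans (le_abs_self _)
  · rw [abs_sub_comm, abs_sub_comm (#T : ℝ)]
    exact (hF.abs_permAvg_sub_le_of_card_le h).trans (le_abs_self _)

theorem bernoulliExp_permAvg (p : ℝ) (F : Finset α → ℝ) :
    bernoulliExp p univ (permAvg F) = bernoulliExp p univ F := by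
  have hperm (π : Equiv.Perm α) :
      (bernoulliExp p univ fun S => F (S.map π.toEmbedding)) = bernoulliExp p univ F := by
    rw [← bernoulliExp_map, map_univ_equiv]
  calc bernoulliExp p univ (permAvg F)
      = 𝔼 π : Equiv.Perm α, bernoulliExp p univ fun S => F (S.map π.toEmbedding) := by
        simp only [bernoulliExp, permAvg, mul_expect, expect_sum_comm]
    _ = bernoulliExp p univ F := by simp only [hperm, Fintype.expect_const]

theorem expect_permAvg_image {ι : Type*} [Fintype ι] [DecidableEq ι] (F : Finset α → ℝ) :
    𝔼 f : ι → α, permAvg F (univ.image f) = 𝔼 f : ι → α, F (univ.image f) := by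
  have hperm (π : Equiv.Perm α) :
      𝔼 f : ι → α, F ((univ.image f).map π.toEmbedding) = 𝔼 f : ι → α, F (univ.image f) :=
    Fintype.expect_equiv (Equiv.arrowCongr (.refl ι) π) _ _ fun f => by
      rw [map_eq_image, image_image]
      rfl
  simp only [permAvg]
  rw [expect_comm]
  simp only [hperm, Fintype.expect_const]

theorem expect_card_insert [Nonempty α] (s : Finset α) :
    𝔼 a, (#(insert a s) : ℝ) = #s + 1 - #s / Fintype.card α := by
  have hinsert (a : α) : (#(insert a s) : ℝ) = (#s + 1 : ℝ) - if a ∈ s then 1 else 0 := by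
    split_ifs with ha
    · rw [insert_eq_of_mem ha, add_sub_cancel_right]
    · rw [card_insert_of_notMem ha, sub_zero, Nat.cast_succ]
  have hmem : 𝔼 a, (if a ∈ s then (1 : ℝ) else 0) = #s / Fintype.card α := by
    rw [Fintype.expect_eq_sum_div_card, sum_boole, filter_univ_mem]
  simp only [hinsert, expect_sub_distrib, Fintype.expect_const, hmem]

variable (α) in
theorem sub_le_expect_card_image [Nonempty α] (N : ℕ) :
    (N : ℝ) - N ^ 2 / Fintype.card α ≤ 𝔼 f : Fin N → α, (#(univ.image f) : ℝ) := by
  induction N with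
  | zero => simp
  | succ N ih =>
    have hα : (0 : ℝ) < Fintype.card α := Nat.cast_pos.2 Fintype.card_pos
    have himage (a : α) (f : Fin N → α) :
        univ.image (Fin.cons a f : Fin (N + 1) → α) = insert a (univ.image f) := by
      ext b
      simp only [mem_image, mem_univ, true_and, Fin.exists_fin_succ, Fin.cons_zero, Fin.cons_succ,
        mem_insert, eq_comm (a := b)]
    have hcard (f : Fin N → α) : #(univ.image f) ≤ N := card_image_le.trans_eq (card_fin N)
    calc ((N + 1 : ℕ) : ℝ) - (N + 1 : ℕ) ^ 2 / Fintype.card α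
        ≤ N - N ^ 2 / Fintype.card α + (1 - N / Fintype.card α) := by
          push_cast
          field_simp
          nlinarith
      _ ≤ 𝔼 f : Fin N → α, (#(univ.image f) : ℝ) + (1 - N / Fintype.card α) := by gcongr
      _ = 𝔼 f : Fin N → α, (#(univ.image f) + (1 - N / Fintype.card α) : ℝ) := by
          rw [expect_add_distrib, Fintype.expect_const]
      _ ≤ 𝔼 f : Fin N → α, 𝔼 a, (#(insert a (univ.image f)) : ℝ) :=
          expect_le_expect fun f _ => by
            rw [expect_card_insert, add_sub_assoc]
            gcongr
            exact hcard f
      _ = 𝔼 f : Fin (N + 1) → α, (#(univ.image f) : ℝ) := by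
          rw [expect_comm, ← expect_product', univ_product_univ]
          exact Fintype.expect_equiv (Fin.consEquiv fun _ => α) _ _ fun x => by
            rw [← himage]
            rfl

theorem CardLipschitz.abs_expect_image_sub_permAvg_le [Nonempty α] (hF : CardLipschitz F) {N : ℕ}
    {S : Finset α} (hS : #S = N) :
    |𝔼 f : Fin N → α, F (univ.image f) - permAvg F S| ≤ N ^ 2 / Fintype.card α := by
  rw [← expect_permAvg_image, abs_sub_comm,
    ← Fintype.expect_const (ι := Fin N → α) (permAvg F S), ← expect_sub_distrib]
  calc |𝔼 f : Fin N → α, (permAvg F S - permAvg F (univ.image f))|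
      ≤ 𝔼 f : Fin N → α, |permAvg F S - permAvg F (univ.image f)| := abs_expect_le _ _
    _ ≤ 𝔼 f : Fin N → α, ((N : ℝ) - #(univ.image f)) := expect_le_expect fun f _ => by
        have hcard : #(univ.image f) ≤ #S := card_image_le.trans_eq ((card_fin N).trans hS.symm)
        simpa only [hS] using hF.abs_permAvg_sub_le_of_card_le hcard
    _ ≤ N ^ 2 / Fintype.card α := by
        rw [expect_sub_distrib, Fintype.expect_const]
        linarith [sub_le_expect_card_image α N]

theorem CardLipschitz.abs_permAvg_sub_bernoulliExp_le (hF : CardLipschitz F) (h0 : 0 ≤ p)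
    (h1 : p ≤ 1) {S : Finset α} (hS : Fintype.card α * p = #S) :
    |permAvg F S - bernoulliExp p univ F| ≤ √(#S) := by
  rw [← card_univ (α := α)] at hS
  rw [← bernoulliExp_permAvg,
    ← bernoulliExp_const (p := p) (s := (univ : Finset α)) (permAvg F S), ← hS]
  refine (abs_bernoulliExp_sub_le h0 h1 fun T _ => ?_).trans (bernoulliExp_abs_card_sub_le h0 h1)
  rw [hS, abs_sub_comm]
  exact hF.abs_permAvg_sub_le S T

theorem CardLipschitz.abs_expect_image_sub_bernoulliExp_le [Nonempty α] (hF : CardLipschitz F)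
    (h0 : 0 ≤ p) (h1 : p ≤ 1) {N : ℕ} (hN : Fintype.card α * p = N) :
    |𝔼 f : Fin N → α, F (univ.image f) - bernoulliExp p univ F| ≤
      N ^ 2 / Fintype.card α + √N := by
  have hNα : N ≤ #(univ : Finset α) := by
    rw [card_univ, ← Nat.cast_le (α := ℝ), ← hN]
    exact mul_le_of_le_one_right (Nat.cast_nonneg _) h1
  obtain ⟨S, -, rfl⟩ := exists_subset_card_eq hNα
  exact (abs_sub_le _ _ _).trans <| add_le_add (hF.abs_expect_image_sub_permAvg_le rfl)
    (hF.abs_permAvg_sub_bernoulliExp_le h0 h1 hN)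

theorem abs_expect_matchingNumber_image_sub_le [Nonempty α] [Fintype β] [DecidableEq β]
    [Nonempty β] (R : α → β → Prop) (hp0 : 0 ≤ p) (hp1 : p ≤ 1) (hq0 : 0 ≤ q) (hq1 : q ≤ 1)
    {N M : ℕ} (hN : Fintype.card α * p = N) (hM : Fintype.card β * q = M) :
    |𝔼 f : Fin N → α, 𝔼 g : Fin M → β, (matchingNumber R (univ.image f) (univ.image g) : ℝ) -
        bernoulliExp p univ fun S => bernoulliExp q univ fun T => matchingNumber R S T| ≤
      N ^ 2 / Fintype.card α + √N + (M ^ 2 / Fintype.card β + √M) := by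
  have hleft := CardLipschitz.abs_expect_image_sub_bernoulliExp_le
    (CardLipschitz.expect (s := univ) fun g : Fin M → β =>
      cardLipschitz_matchingNumber_left R (univ.image g)) hp0 hp1 hN
  have hright := abs_bernoulliExp_sub_le (s := (univ : Finset α)) hp0 hp1 fun S _ =>
    (cardLipschitz_matchingNumber_right R S).abs_expect_image_sub_bernoulliExp_le hq0 hq1 hM
  rw [bernoulliExp_const] at hright
  exact (abs_sub_le _ _ _).trans (add_le_add hleft hright)

end Occupancy

section Cells

open Finset Set
open scoped BigOperators

theorem integral_pi_comp_eq_expect {ι Ω α : Type*} [Fintype ι] [DecidableEq ι] [Fintype α]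
    [MeasurableSpace Ω] [MeasurableSpace α] [MeasurableSingletonClass α] {μ : Measure Ω}
    [IsProbabilityMeasure μ] {c : Ω → α} (hc : Measurable c)
    (hunif : ∀ a, μ (c ⁻¹' {a}) = (Fintype.card α : ENNReal)⁻¹) (G : (ι → α) → ℝ) :
    ∫ x, G (c ∘ x) ∂(Measure.pi fun _ : ι => μ) = 𝔼 f, G f := by
  have hcomp : Measurable fun x : ι → Ω => c ∘ x :=
    measurable_pi_lambda _ fun i => hc.comp (measurable_pi_apply i)
  have hlaw (f : ι → α) : ((Measure.pi fun _ : ι => μ).map (c ∘ ·)).real {f} =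
      (Fintype.card (ι → α) : ℝ)⁻¹ := by
    have hpre : (c ∘ ·) ⁻¹' {f} = Set.univ.pi fun i : ι => c ⁻¹' {f i} := by
      ext x
      simp [funext_iff]
    rw [measureReal_def, Measure.map_apply hcomp (measurableSet_singleton f), hpre, Measure.pi_pi]
    simp [hunif]
  rw [← integral_map (φ := (c ∘ ·)) hcomp.aemeasurable
    (measurable_of_finite G).aestronglyMeasurable, integral_fintype .of_finite,
    Fintype.expect_eq_sum_div_card, sum_div]
  simp only [hlaw, smul_eq_mul, inv_mul_eq_div]

instance isProbabilityMeasure_restrict_Icc :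
    IsProbabilityMeasure (volume.restrict (Icc (0 : ℝ) 1)) := ⟨by simp⟩

instance isProbabilityMeasure_unifCube (N : ℕ) : IsProbabilityMeasure (unifCube N) := by
  unfold unifCube
  infer_instance

theorem ae_mem_Ico_unifCube (N : ℕ) : ∀ᵐ X ∂unifCube N, ∀ i, X i ∈ Ico (0 : ℝ) 1 := by
  refine ae_all_iff.2 fun i => ?_
  have h : ∀ᵐ x ∂volume.restrict (Icc (0 : ℝ) 1), x ∈ Ico (0 : ℝ) 1 := by
    rw [← Measure.restrict_congr_set Ico_ae_eq_Icc]
    exact ae_restrict_mem measurableSet_Ico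
  exact (Measure.quasiMeasurePreserving_eval _ i).ae h

variable {n N M r : ℕ} [NeZero n] {s x : ℝ} {X : Fin N → ℝ} {Y : Fin M → ℝ}

/-- The index of the cell `[a / n, (a + 1) / n)` containing `x`, for `x ∈ [0, 1)`. Other values of
`x` are wrapped around. -/
noncomputable def cell (n : ℕ) [NeZero n] (x : ℝ) : Fin n :=
  Fin.ofNat n ⌊n * x⌋₊

variable (n) in
theorem measurable_cell : Measurable (cell n) :=
  (measurable_of_countable (Fin.ofNat n)).comp
    (Nat.measurable_floor.comp (measurable_const_mul (n : ℝ)))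

theorem val_cell (hx : x ∈ Ico (0 : ℝ) 1) : (cell n x : ℕ) = ⌊n * x⌋₊ := by
  have hn : (0 : ℝ) < n := Nat.cast_pos.2 (NeZero.pos n)
  rw [cell, Fin.val_ofNat, Nat.mod_eq_of_lt]
  exact (Nat.floor_lt (mul_nonneg hn.le hx.1)).2 (mul_lt_of_lt_one_right hn hx.2)

theorem cell_eq_iff (hx : x ∈ Ico (0 : ℝ) 1) (a : Fin n) :
    cell n x = a ↔ (a : ℝ) ≤ n * x ∧ n * x < a + 1 := by
  rw [Fin.ext_iff, val_cell hx, Nat.floor_eq_iff (mul_nonneg n.cast_nonneg hx.1)]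

variable (n) in
theorem cell_le_mul (hx : x ∈ Ico (0 : ℝ) 1) : (cell n x : ℝ) ≤ n * x :=
  ((cell_eq_iff hx _).1 rfl).1

variable (n) in
theorem mul_lt_cell_add_one (hx : x ∈ Ico (0 : ℝ) 1) : n * x < cell n x + 1 :=
  ((cell_eq_iff hx _).1 rfl).2

theorem cell_preimage_singleton_inter (a : Fin n) :
    cell n ⁻¹' {a} ∩ Ico 0 1 = Ico ((a : ℝ) / n) ((a + 1) / n) := by
  have hn : (0 : ℝ) < n := Nat.cast_pos.2 (NeZero.pos n)
  have hsub : Ico ((a : ℝ) / n) ((a + 1) / n) ⊆ Ico 0 1 := by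
    have ha : (a : ℝ) + 1 ≤ n := by exact_mod_cast a.2
    exact Ico_subset_Ico (by positivity) ((div_le_one hn).2 ha)
  have hiff {x : ℝ} (hx : x ∈ Ico (0 : ℝ) 1) :
      cell n x = a ↔ x ∈ Ico ((a : ℝ) / n) ((a + 1) / n) := by
    rw [cell_eq_iff hx, Set.mem_Ico, div_le_iff₀' hn, lt_div_iff₀' hn]
  ext x
  exact ⟨fun ⟨hxa, hx⟩ => (hiff hx).1 hxa, fun hx => ⟨(hiff (hsub hx)).2 hx, hsub hx⟩⟩

theorem volume_restrict_cell_preimage (a : Fin n) :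
    volume.restrict (Icc (0 : ℝ) 1) (cell n ⁻¹' {a}) = (Fintype.card (Fin n) : ENNReal)⁻¹ := by
  rw [← Measure.restrict_congr_set Ico_ae_eq_Icc,
    Measure.restrict_apply (measurable_cell n (measurableSet_singleton a)),
    cell_preimage_singleton_inter, Real.volume_Ico, ← sub_div, add_sub_cancel_left, one_div,
    ENNReal.ofReal_inv_of_pos (Nat.cast_pos.2 (NeZero.pos n)), ENNReal.ofReal_natCast,
    Fintype.card_fin]

theorem integrable_cells (G : (Fin N → Fin n) → (Fin M → Fin n) → ℝ) :
    Integrable (fun ω => G (cell n ∘ ω.1) (cell n ∘ ω.2)) ((unifCube N).prod (unifCube M)) := by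
  have hcomp (k : ℕ) : Measurable fun X : Fin k → ℝ => cell n ∘ X :=
    measurable_pi_lambda _ fun i => (measurable_cell n).comp (measurable_pi_apply i)
  exact Integrable.comp_measurable (f := Prod.map (cell n ∘ ·) (cell n ∘ ·))
    (g := fun x => G x.1 x.2) .of_finite ((hcomp N).prodMap (hcomp M))

theorem integral_cells (G : (Fin N → Fin n) → (Fin M → Fin n) → ℝ) :
    ∫ ω, G (cell n ∘ ω.1) (cell n ∘ ω.2) ∂((unifCube N).prod (unifCube M)) =
      𝔼 f, 𝔼 g, G f g := by
  have hunif (k : ℕ) (F : (Fin k → Fin n) → ℝ) : ∫ X, F (cell n ∘ X) ∂unifCube k = 𝔼 f, F f :=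
    integral_pi_comp_eq_expect (measurable_cell n) volume_restrict_cell_preimage F
  rw [integral_prod _ (integrable_cells G)]
  simp only [hunif]
  exact hunif N fun f => 𝔼 g, G f g

theorem mmSize_eq_matchingNumber (s : ℝ) (X : Fin N → ℝ) (Y : Fin M → ℝ) :
    mmSize s X Y = matchingNumber (fun i j => |X i - Y j| < s) univ univ := by
  have hset : {k : ℕ | ∃ σ : Fin k → Fin N, ∃ τ : Fin k → Fin M, σ.Injective ∧ τ.Injective ∧
      ∀ i, |X (σ i) - Y (τ i)| < s} =
      Set.Iic (matchingNumber (fun i j => |X i - Y j| < s) univ univ) := by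
    ext k
    simp only [Set.mem_ofPred_eq, Set.mem_Iic, le_matchingNumber_iff, Finset.mem_univ, true_and]
  rw [mmSize, hset, csSup_Iic]

theorem le_mmSize_iff {k : ℕ} : k ≤ mmSize s X Y ↔ ∃ (σ : Fin k → Fin N) (τ : Fin k → Fin M),
    σ.Injective ∧ τ.Injective ∧ ∀ i, |X (σ i) - Y (τ i)| < s := by
  simp only [mmSize_eq_matchingNumber, le_matchingNumber_iff, Finset.mem_univ, true_and]

theorem measurable_mmSize (s : ℝ) (N M : ℕ) :
    Measurable fun ω : (Fin N → ℝ) × (Fin M → ℝ) => mmSize s ω.1 ω.2 := by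
  refine measurable_of_Ici fun k => ?_
  have hpre : (fun ω : (Fin N → ℝ) × (Fin M → ℝ) => mmSize s ω.1 ω.2) ⁻¹' Set.Ici k =
      ⋃ σ : Fin k → Fin N, ⋃ τ : Fin k → Fin M, ⋃ _ : σ.Injective, ⋃ _ : τ.Injective,
        ⋂ i, {ω | |ω.1 (σ i) - ω.2 (τ i)| < s} := by
    ext ω
    simp only [Set.mem_preimage, Set.mem_Ici, le_mmSize_iff, Set.mem_iUnion, Set.mem_iInter,
      Set.mem_ofPred_eq, exists_prop]
  rw [hpre]
  exact .iUnion fun σ => .iUnion fun τ => .iUnion fun _ => .iUnion fun _ => .iInter fun i =>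
    measurableSet_lt (by fun_prop) measurable_const

theorem integrable_mmSize (s : ℝ) (N M : ℕ) :
    Integrable (fun ω => (mmSize s ω.1 ω.2 : ℝ)) ((unifCube N).prod (unifCube M)) := by
  refine Integrable.of_bound
    (measurable_from_top.comp (measurable_mmSize s N M)).aestronglyMeasurable N
    (.of_forall fun ω => ?_)
  rw [Real.norm_of_nonneg (Nat.cast_nonneg _), Nat.cast_le, mmSize_eq_matchingNumber]
  exact matchingNumber_le_card_left.trans_eq (card_fin N)

/-- The maximum matching size of the band relation of width `r` between the sets of values of `f`
and `g`. -/
noncomputable def cellMatchingNumber (r : ℕ) (f : Fin N → Fin n) (g : Fin M → Fin n) : ℕ :=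
  matchingNumber (fun a b : Fin n => Within r a b) (univ.image f) (univ.image g)

theorem cellMatchingNumber_le_mmSize (hs : (r : ℝ) + 1 ≤ n * s) (hX : ∀ i, X i ∈ Ico (0 : ℝ) 1)
    (hY : ∀ j, Y j ∈ Ico (0 : ℝ) 1) :
    cellMatchingNumber r (cell n ∘ X) (cell n ∘ Y) ≤ mmSize s X Y := by
  rw [mmSize_eq_matchingNumber]
  refine matchingNumber_image_le fun i _ j _ hij => ?_
  have hn : (0 : ℝ) < n := Nat.cast_pos.2 (NeZero.pos n)
  have hle : (cell n (X i) : ℝ) ≤ cell n (Y j) + r := by exact_mod_cast hij.1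
  have hge : (cell n (Y j) : ℝ) ≤ cell n (X i) + r := by exact_mod_cast hij.2
  have hscaled : |n * X i - n * Y j| < r + 1 := by
    rw [abs_lt]
    constructor <;> linarith [cell_le_mul n (hX i), mul_lt_cell_add_one n (hX i),
      cell_le_mul n (hY j), mul_lt_cell_add_one n (hY j)]
  rw [← mul_sub, abs_mul, abs_of_pos hn] at hscaled
  exact lt_of_mul_lt_mul_left (hscaled.trans_le hs) hn.le

theorem mmSize_add_card_image_le (hs : n * s ≤ r) (hX : ∀ i, X i ∈ Ico (0 : ℝ) 1)
    (hY : ∀ j, Y j ∈ Ico (0 : ℝ) 1) :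
    mmSize s X Y + #(univ.image (cell n ∘ X)) + #(univ.image (cell n ∘ Y)) ≤
      cellMatchingNumber r (cell n ∘ X) (cell n ∘ Y) + N + M := by
  have hwithin : ∀ i j, |X i - Y j| < s → Within r (cell n (X i)) (cell n (Y j)) := by
    intro i j hij
    have hn : (0 : ℝ) < n := Nat.cast_pos.2 (NeZero.pos n)
    have hscaled : |n * X i - n * Y j| < r := by
      rw [← mul_sub, abs_mul, abs_of_pos hn]
      exact (mul_lt_mul_of_pos_left hij hn).trans_le hs
    obtain ⟨hge, hle⟩ := abs_lt.1 hscaled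
    constructor <;> refine Nat.lt_succ_iff.1 (Nat.cast_lt (α := ℝ).1 ?_) <;> push_cast <;>
      linarith [cell_le_mul n (hX i), mul_lt_cell_add_one n (hX i),
        cell_le_mul n (hY j), mul_lt_cell_add_one n (hY j)]
  have h := matchingNumber_add_card_image_le (A := univ) (B := univ)
    (R' := fun a b : Fin n => Within r a b) fun i _ j _ => hwithin i j
  rw [card_fin, card_fin, ← mmSize_eq_matchingNumber] at h
  exact h

theorem ae_mem_Ico_unifCube_prod (N M : ℕ) : ∀ᵐ ω ∂((unifCube N).prod (unifCube M)),
    (∀ i, ω.1 i ∈ Ico (0 : ℝ) 1) ∧ ∀ j, ω.2 j ∈ Ico (0 : ℝ) 1 :=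
  (Measure.quasiMeasurePreserving_fst.ae (ae_mem_Ico_unifCube N)).and
    (Measure.quasiMeasurePreserving_snd.ae (ae_mem_Ico_unifCube M))

theorem expect_cellMatchingNumber_le_integral_mmSize (hs : (r : ℝ) + 1 ≤ n * s) :
    𝔼 f : Fin N → Fin n, 𝔼 g : Fin M → Fin n, (cellMatchingNumber r f g : ℝ) ≤
      ∫ ω, (mmSize s ω.1 ω.2 : ℝ) ∂((unifCube N).prod (unifCube M)) := by
  rw [← integral_cells]
  refine integral_mono_ae (integrable_cells fun f g => (cellMatchingNumber r f g : ℝ))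
    (integrable_mmSize s N M) ?_
  filter_upwards [ae_mem_Ico_unifCube_prod N M] with ω hω
  exact Nat.cast_le.2 (cellMatchingNumber_le_mmSize hs hω.1 hω.2)

theorem integral_mmSize_le_expect_cellMatchingNumber_add (hs : n * s ≤ r) :
    ∫ ω, (mmSize s ω.1 ω.2 : ℝ) ∂((unifCube N).prod (unifCube M)) ≤
      𝔼 f : Fin N → Fin n, 𝔼 g : Fin M → Fin n, (cellMatchingNumber r f g : ℝ) +
        (N ^ 2 / n + M ^ 2 / n) := by
  let G (f : Fin N → Fin n) (g : Fin M → Fin n) : ℝ :=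
    cellMatchingNumber r f g + ((N - #(univ.image f)) + (M - #(univ.image g)))
  calc ∫ ω, (mmSize s ω.1 ω.2 : ℝ) ∂((unifCube N).prod (unifCube M))
      ≤ ∫ ω, G (cell n ∘ ω.1) (cell n ∘ ω.2) ∂((unifCube N).prod (unifCube M)) := by
        refine integral_mono_ae (integrable_mmSize s N M) (integrable_cells G) ?_
        filter_upwards [ae_mem_Ico_unifCube_prod N M] with ω hω
        have h := Nat.cast_le (α := ℝ).2 (mmSize_add_card_image_le hs hω.1 hω.2)
        push_cast at h
        simp only [G]
        linarith
    _ = 𝔼 f, 𝔼 g, G f g := integral_cells G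
    _ = 𝔼 f : Fin N → Fin n, 𝔼 g : Fin M → Fin n, (cellMatchingNumber r f g : ℝ) +
        ((N - 𝔼 f : Fin N → Fin n, (#(univ.image f) : ℝ)) +
          (M - 𝔼 g : Fin M → Fin n, (#(univ.image g) : ℝ))) := by
        simp only [G, expect_add_distrib, expect_sub_distrib, Fintype.expect_const]
    _ ≤ _ := by
        have hN := sub_le_expect_card_image (Fin n) N
        have hM := sub_le_expect_card_image (Fin n) M
        rw [Fintype.card_fin] at hN hM
        linarith

omit [NeZero n] in
theorem bernoulliExp_univ_fin_matchingNumber (r : ℕ) (p : ℝ) :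
    (bernoulliExp p univ fun S => bernoulliExp p univ fun T =>
      (matchingNumber (fun a b : Fin n => Within r a b) S T : ℝ)) = bandMean r p n n := by
  have hmap (S T : Finset (Fin n)) : matchingNumber (fun a b : Fin n => Within r a b) S T =
      matchingNumber (Within r) (S.map Fin.valEmbedding) (T.map Fin.valEmbedding) := by
    rw [map_eq_image, map_eq_image]
    exact le_antisymm
      (matchingNumber_le_image Fin.val_injective.injOn Fin.val_injective.injOn
        fun _ _ _ _ h => h)
      (matchingNumber_image_le fun _ _ _ _ h => h)
  have hrange : range n = (univ : Finset (Fin n)).map Fin.valEmbedding := by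
    rw [Fin.map_valEmbedding_univ, Nat.Iio_eq_range]
  simp only [bandMean, hrange, bernoulliExp_map, hmap]

theorem abs_expect_cellMatchingNumber_sub_bandMean_le {p : ℝ} (h0 : 0 ≤ p) (h1 : p ≤ 1)
    (hN : n * p = N) :
    |𝔼 f : Fin N → Fin n, 𝔼 g : Fin N → Fin n, (cellMatchingNumber r f g : ℝ) -
      bandMean r p n n| ≤ 2 * (N ^ 2 / n + √N) := by
  have hcard : (Fintype.card (Fin n) : ℝ) * p = N := by rw [Fintype.card_fin, hN]
  have h := abs_expect_matchingNumber_image_sub_le (fun a b : Fin n => Within r a b)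
    h0 h1 h0 h1 hcard hcard
  rwa [bernoulliExp_univ_fin_matchingNumber, Fintype.card_fin, ← two_mul] at h

end Cells

section Limit

open Filter Topology

variable {n N K r : ℕ} {s p c a : ℝ}

/-- The expected maximum matching size of `N` and `N` independent uniform points of `[0, 1]` with
threshold `s`, so that `E[m*(c, N)]` is `meanMmSize (c / N) N`. -/
noncomputable def meanMmSize (s : ℝ) (N : ℕ) : ℝ :=
  ∫ ω, (mmSize s ω.1 ω.2 : ℝ) ∂((unifCube N).prod (unifCube N))

theorem bandMean_sub_le_meanMmSize [NeZero n] (h0 : 0 ≤ p) (h1 : p ≤ 1) (hN : n * p = N)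
    (hs : (r : ℝ) + 1 ≤ n * s) :
    bandMean r p n n - 2 * (N ^ 2 / n + √N) ≤ meanMmSize s N := by
  have hband := abs_le.1 (abs_expect_cellMatchingNumber_sub_bandMean_le (r := r) h0 h1 hN)
  have hcells := expect_cellMatchingNumber_le_integral_mmSize (N := N) (M := N) hs
  rw [meanMmSize]
  linarith

theorem meanMmSize_le_bandMean_add [NeZero n] (h0 : 0 ≤ p) (h1 : p ≤ 1) (hN : n * p = N)
    (hs : n * s ≤ r) :
    meanMmSize s N ≤ bandMean r p n n + (4 * (N ^ 2 / n) + 2 * √N) := by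
  have hband := abs_le.1 (abs_expect_cellMatchingNumber_sub_bandMean_le (r := r) h0 h1 hN)
  have hcells := integral_mmSize_le_expect_cellMatchingNumber_add (N := N) (M := N) hs
  rw [meanMmSize]
  linarith

theorem tendsto_sqrt_natCast_div : Tendsto (fun N : ℕ => √N / (N : ℝ)) atTop (𝓝 0) := by
  simp only [Real.sqrt_div_self']
  exact (Real.tendsto_sqrt_atTop.comp tendsto_natCast_atTop_atTop).const_div_atTop 1

theorem tendsto_bandMean_mul_div (r : ℕ) (hK : 0 < K) :
    Tendsto (fun N : ℕ => bandMean r (1 / K) (K * N) (K * N) / N) atTop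
      (𝓝 ((2 * r + 1) / (K + 2 * r))) := by
  have hK' : (1 : ℝ) ≤ K := Nat.one_le_cast.2 hK
  have hrate : K * bandRate r (1 / K) = (2 * r + 1) / (K + 2 * r) := by
    rw [bandRate]
    field_simp
  rw [← hrate]
  refine (((tendsto_bandMean_div r (by positivity) ((div_le_one (by positivity)).2 hK')).comp
    (tendsto_id.const_mul_atTop' hK)).const_mul (K : ℝ)).congr fun N => ?_
  simp only [Function.comp_apply, id_eq]
  push_cast
  field_simp

theorem eventually_lt_meanMmSize_div (hK : 0 < K) (hr : (r : ℝ) + 1 ≤ K * c)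
    (ha : a < (2 * r + 1) / (K + 2 * r) - 2 / K) :
    ∀ᶠ N : ℕ in atTop, a < meanMmSize (c / N) N / N := by
  have hlim := ((tendsto_bandMean_mul_div r hK).sub_const (2 / (K : ℝ))).sub
    (tendsto_sqrt_natCast_div.const_mul 2)
  rw [mul_zero, sub_zero] at hlim
  filter_upwards [hlim.eventually_const_lt ha, eventually_gt_atTop 0] with N haN hN
  have : NeZero (K * N) := ⟨by positivity⟩
  have hN : (0 : ℝ) < N := Nat.cast_pos.2 hN
  have hp1 : 1 / (K : ℝ) ≤ 1 := (div_le_one (Nat.cast_pos.2 hK)).2 (Nat.one_le_cast.2 hK)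
  have hdensity : ((K * N : ℕ) : ℝ) * (1 / K) = N := by
    push_cast
    field_simp
  have hthreshold : (r : ℝ) + 1 ≤ (K * N : ℕ) * (c / N) := by
    rwa [Nat.cast_mul, mul_assoc, mul_div_cancel₀ _ hN.ne']
  calc a < bandMean r (1 / K) (K * N) (K * N) / N - 2 / K - 2 * (√N / N) := haN
    _ = (bandMean r (1 / K) (K * N) (K * N) - 2 * (N ^ 2 / (K * N : ℕ) + √N)) / N := by
        push_cast
        field_simp
        ring
    _ ≤ meanMmSize (c / N) N / N := div_le_div_of_nonneg_right
        (bandMean_sub_le_meanMmSize (by positivity) hp1 hdensity hthreshold) hN.le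

theorem eventually_meanMmSize_div_lt (hK : 0 < K) (hr : K * c ≤ r)
    (ha : (2 * r + 1) / (K + 2 * r) + 4 / K < a) :
    ∀ᶠ N : ℕ in atTop, meanMmSize (c / N) N / N < a := by
  have hlim := ((tendsto_bandMean_mul_div r hK).add_const (4 / (K : ℝ))).add
    (tendsto_sqrt_natCast_div.const_mul 2)
  rw [mul_zero, add_zero] at hlim
  filter_upwards [hlim.eventually_lt_const ha, eventually_gt_atTop 0] with N haN hN
  have : NeZero (K * N) := ⟨by positivity⟩
  have hN : (0 : ℝ) < N := Nat.cast_pos.2 hN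
  have hp1 : 1 / (K : ℝ) ≤ 1 := (div_le_one (Nat.cast_pos.2 hK)).2 (Nat.one_le_cast.2 hK)
  have hdensity : ((K * N : ℕ) : ℝ) * (1 / K) = N := by
    push_cast
    field_simp
  have hthreshold : (K * N : ℕ) * (c / N) ≤ r := by
    rwa [Nat.cast_mul, mul_assoc, mul_div_cancel₀ _ hN.ne']
  calc meanMmSize (c / N) N / N
      ≤ (bandMean r (1 / K) (K * N) (K * N) + (4 * (N ^ 2 / (K * N : ℕ)) + 2 * √N)) / N :=
        div_le_div_of_nonneg_right
          (meanMmSize_le_bandMean_add (by positivity) hp1 hdensity hthreshold) hN.le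
    _ = bandMean r (1 / K) (K * N) (K * N) / N + 4 / K + 2 * (√N / N) := by
        push_cast
        field_simp
        ring
    _ < a := haN

theorem tendsto_two_mul_add_one_div (hc : 0 ≤ c) {ρ : ℕ → ℕ}
    (hρ : Tendsto (fun K : ℕ => (ρ K : ℝ) / K) atTop (𝓝 c)) :
    Tendsto (fun K : ℕ => (2 * ρ K + 1 : ℝ) / (K + 2 * ρ K)) atTop (𝓝 (c / (c + 1 / 2))) := by
  have hdiv := ((hρ.const_mul 2).add (tendsto_const_div_atTop_nhds_zero_nat 1)).div
    ((hρ.const_mul 2).const_add 1) (by positivity)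
  have hvalue : (2 * c + 0) / (1 + 2 * c) = c / (c + 1 / 2) := by
    field_simp
    ring
  rw [hvalue] at hdiv
  refine hdiv.congr' ?_
  filter_upwards [eventually_gt_atTop 0] with K hK
  simp only [Pi.div_apply]
  field_simp

theorem tendsto_floor_sub_one_div (hc : 0 < c) :
    Tendsto (fun K : ℕ => ((⌊c * K⌋₊ - 1 : ℕ) : ℝ) / K) atTop (𝓝 c) := by
  have hfloor := ((tendsto_nat_floor_mul_div_atTop hc.le).comp
    tendsto_natCast_atTop_atTop).sub (tendsto_const_div_atTop_nhds_zero_nat 1)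
  rw [sub_zero] at hfloor
  refine hfloor.congr' ?_
  filter_upwards [(tendsto_natCast_atTop_atTop.const_mul_atTop hc).eventually_ge_atTop 1]
    with K hK
  rw [Nat.cast_sub (Nat.le_floor (by exact_mod_cast hK)), sub_div, Nat.cast_one]
  rfl

theorem eventually_lt_meanMmSize_div_of_lt (hc : 0 < c) (ha : a < c / (c + 1 / 2)) :
    ∀ᶠ N : ℕ in atTop, a < meanMmSize (c / N) N / N := by
  have hlim := (tendsto_two_mul_add_one_div hc.le (tendsto_floor_sub_one_div hc)).sub
    (tendsto_const_div_atTop_nhds_zero_nat 2)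
  rw [sub_zero] at hlim
  obtain ⟨K, haK, hcK, hK⟩ := ((hlim.eventually_const_lt ha).and
    (((tendsto_natCast_atTop_atTop.const_mul_atTop hc).eventually_ge_atTop 1).and
      (eventually_gt_atTop 0))).exists
  refine eventually_lt_meanMmSize_div hK ?_ haK
  rw [Nat.cast_sub (Nat.le_floor (by exact_mod_cast hcK)), Nat.cast_one, sub_add_cancel,
    mul_comm (K : ℝ)]
  exact Nat.floor_le (zero_le_one.trans hcK)

theorem eventually_meanMmSize_div_lt_of_lt (hc : 0 ≤ c) (ha : c / (c + 1 / 2) < a) :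
    ∀ᶠ N : ℕ in atTop, meanMmSize (c / N) N / N < a := by
  have hlim := (tendsto_two_mul_add_one_div hc
    ((tendsto_nat_ceil_mul_div_atTop hc).comp tendsto_natCast_atTop_atTop)).add
      (tendsto_const_div_atTop_nhds_zero_nat 4)
  rw [add_zero] at hlim
  obtain ⟨K, haK, hK⟩ := ((hlim.eventually_lt_const ha).and (eventually_gt_atTop 0)).exists
  exact eventually_meanMmSize_div_lt hK (mul_comm (K : ℝ) c ▸ Nat.le_ceil _) haK

end Limit

/-- `lim_{N→∞} E[m*(c,N)] / N = c / (c + 1/2)`. -/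
theorem stmt3 (c : ℝ) (hc : 0 < c) :
    Filter.Tendsto
      (fun N : ℕ =>
        (∫ ω, (mmSize (c / N) ω.1 ω.2 : ℝ) ∂((unifCube N).prod (unifCube N))) / N)
      Filter.atTop (nhds (c / (c + 1/2))) :=
  tendsto_order.2 ⟨fun _ ha => eventually_lt_meanMmSize_div_of_lt hc ha,
    fun _ ha => eventually_meanMmSize_div_lt_of_lt hc.le ha⟩
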